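/- For every odd positive integer m, the polynomial P_m(z) = P_m^{(m+1/2, -m-1/2)}(z) has exactly one real zero x*, and this zero satisfies x* < -1. -/

import Mathlib

open Finset

/-- Generalized binomial coefficient `binom(u, j) = u(u-1)⋯(u-j+1)/j!`. -/
noncomputable def gbinom (u : ℝ) (j : ℕ) : ℝ :=
  (∏ i ∈ Finset.range j, (u - i)) / (Nat.factorial j)

/-- Jacobi polynomial via the explicit sum formula. -/
noncomputable def jacobiP (n : ℕ) (α β : ℝ) (x : ℝ) : ℝ :=
  ((2:ℝ)^n)⁻¹ * ∑ k ∈ Finset.range (n+1),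
    gbinom ((n:ℝ) + α) (n - k) * gbinom ((n:ℝ) + β) k * (x - 1)^k * (x + 1)^(n - k)

section Helpers
open Polynomial

/-- The differential operator of the Jacobi equation, as a linear map applied to a polynomial. -/
noncomputable def jacL (m : ℕ) (p : ℝ[X]) : ℝ[X] :=
  (1 - X ^ 2) * derivative (derivative p) - (C (2 * (m:ℝ) + 1) + 2 * X) * derivative p
    + C ((m:ℝ) * (m + 1)) * p

lemma jacL_add (m : ℕ) (p q : ℝ[X]) : jacL m (p + q) = jacL m p + jacL m q := by
  simp only [jacL, derivative_add]; ring

lemma jacL_C_mul (m : ℕ) (a : ℝ) (p : ℝ[X]) : jacL m (C a * p) = C a * jacL m p := by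
  simp only [jacL, derivative_C_mul]; ring

lemma eval_jacL_term (k l : ℕ) (x : ℝ) :
    (jacL (k + l) ((X - 1) ^ k * (X + 1) ^ l)).eval x =
      -2 * k * (k + (k + l) + 1 / 2) * ((x - 1) ^ (k - 1) * (x + 1) ^ l)
      - 2 * (l * (k + 1 / 2)) * ((x - 1) ^ k * (x + 1) ^ (l - 1)) := by
  have e : (X - 1 : ℝ[X]) = X - C 1 := by simp
  have e' : (X + 1 : ℝ[X]) = X + C 1 := by simp
  rcases k with _ | _ | k <;> rcases l with _ | _ | l <;>
    simp [jacL, derivative_mul, derivative_pow] <;> ring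

noncomputable def acoef (m k : ℕ) : ℝ := gbinom (2 * (m:ℝ) + 1 / 2) (m - k) * gbinom (-1 / 2) k

lemma gbinom_succ (u : ℝ) (j : ℕ) : gbinom u (j + 1) * (j + 1) = gbinom u j * (u - j) := by
  unfold gbinom
  rw [Finset.prod_range_succ, Nat.factorial_succ]
  have : (Nat.factorial j : ℝ) ≠ 0 := by positivity
  push_cast
  field_simp

lemma acoef_rec (k l : ℕ) :
    acoef (k + 1 + l) (k + 1) * ((k + 1) * (k + 1 + (k + 1 + l) + 1 / 2)) =
      - ((l + 1) * (k + 1 / 2)) * acoef (k + 1 + l) k := by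
  unfold acoef
  have h1 : k + 1 + l - (k + 1) = l := by omega
  have h2 : k + 1 + l - k = l + 1 := by omega
  rw [h1, h2]
  have g1 := gbinom_succ (-1 / 2) k
  have g2 := gbinom_succ (2 * ((k + 1 + l : ℕ):ℝ) + 1 / 2) l
  push_cast at g1 g2 ⊢
  generalize gbinom (2 * ((k:ℝ) + 1 + l) + 1 / 2) (l + 1) = p at *
  generalize gbinom (2 * ((k:ℝ) + 1 + l) + 1 / 2) l = q at *
  generalize gbinom (-1 / 2) (k + 1) = r at *
  generalize gbinom (-1 / 2) k = s at *
  linear_combination (q * (k + 1 + (k + 1 + l) + 1 / 2)) * g1 + (k + 1 / 2) * s * g2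

noncomputable def Y (m n : ℕ) : ℝ[X] :=
  ∑ k ∈ Finset.range (n + 1), C (acoef m k) * ((X - 1) ^ k * (X + 1) ^ (m - k))

lemma eval_jacL_Y (m n : ℕ) (hn : n ≤ m) (x : ℝ) :
    (jacL m (Y m n)).eval x =
      - 2 * (((m:ℝ) - n) * (n + 1 / 2)) * acoef m n * ((x - 1) ^ n * (x + 1) ^ (m - n - 1)) := by
  induction n with
  | zero =>
    have := eval_jacL_term 0 m x
    simp only [zero_add] at this
    simp only [Y, zero_add, Finset.sum_range_one, jacL_C_mul, eval_mul, eval_C, Nat.sub_zero, this]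
    push_cast
    ring
  | succ n ih =>
    obtain ⟨l, rfl⟩ := Nat.exists_eq_add_of_le hn
    have hY : Y (n + 1 + l) (n + 1) = Y (n + 1 + l) n +
        C (acoef (n + 1 + l) (n + 1)) * ((X - 1) ^ (n + 1) * (X + 1) ^ (n + 1 + l - (n + 1))) := by
      rw [Y, Finset.sum_range_succ]; rfl
    have h1 : n + 1 + l - (n + 1) = l := by omega
    have h2 : n + 1 + l - n - 1 = l := by omega
    rw [hY, jacL_add, jacL_C_mul, eval_add, ih (by omega), h1, h2, eval_mul, eval_C,
      eval_jacL_term]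
    have r := acoef_rec n l
    push_cast
    linear_combination (-2 * ((x - 1) ^ n * (x + 1) ^ l)) * r

lemma jacL_Y (m : ℕ) : jacL m (Y m m) = 0 := by
  apply Polynomial.funext
  intro x
  rw [eval_jacL_Y m m le_rfl]
  simp

lemma jacobiP_eq (m : ℕ) (x : ℝ) :
    jacobiP m ((m:ℝ) + 1/2) (-(m:ℝ) - 1/2) x = ((2:ℝ)^m)⁻¹ * (Y m m).eval x := by
  unfold jacobiP Y
  rw [eval_finsetSum]
  congr 1
  refine Finset.sum_congr rfl fun k _ => ?_
  have h1 : (m:ℝ) + (m + 1/2) = 2 * m + 1 / 2 := by ring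
  have h2 : (m:ℝ) + (-m - 1/2) = -1 / 2 := by ring
  rw [h1, h2]
  simp [acoef]
  ring

lemma gbinom_pos (m j : ℕ) (h : j ≤ m) : 0 < gbinom (2 * (m:ℝ) + 1 / 2) j := by
  unfold gbinom
  apply div_pos _ (by positivity)
  apply Finset.prod_pos
  intro i hi
  have : i < j := Finset.mem_range.mp hi
  have : (i:ℝ) ≤ m := by exact_mod_cast (by omega : i ≤ m)
  have : (0:ℝ) ≤ m := by positivity
  linarith

lemma gbinom_half (k : ℕ) : 0 < gbinom (-1 / 2) k * (-1) ^ k := by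
  induction k with
  | zero => simp [gbinom]
  | succ k ih =>
    have g := gbinom_succ (-1 / 2) k
    have : 0 < gbinom (-1 / 2) (k + 1) * (-1) ^ (k + 1) * ((k:ℝ) + 1) := by
      have e : gbinom (-1 / 2) (k + 1) * (-1) ^ (k + 1) * ((k:ℝ) + 1) =
        (gbinom (-1 / 2) k * (-1) ^ k) * (k + 1 / 2) := by
        linear_combination ((-1) ^ (k + 1)) * g
      rw [e]; positivity
    exact pos_of_mul_pos_left this (by positivity)

lemma Y_pos (m : ℕ) (x : ℝ) (h1 : -1 ≤ x) (h2 : x ≤ 1) : 0 < (Y m m).eval x := by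
  have e : (Y m m).eval x = ∑ k ∈ Finset.range (m + 1),
      gbinom (2 * (m:ℝ) + 1 / 2) (m - k) * (gbinom (-1 / 2) k * (-1) ^ k) *
        ((1 - x) ^ k * (1 + x) ^ (m - k)) := by
    unfold Y
    rw [eval_finsetSum]
    refine Finset.sum_congr rfl fun k _ => ?_
    have : (x - 1) ^ k = (-1) ^ k * (1 - x) ^ k := by rw [← mul_pow]; ring
    simp [acoef, this]
    ring
  rw [e]
  have p1 : 0 ≤ 1 - x := by linarith
  have p2 : 0 ≤ 1 + x := by linarith
  have pc : ∀ k, 0 < gbinom (2 * (m:ℝ) + 1 / 2) (m - k) * (gbinom (-1 / 2) k * (-1) ^ k) :=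
    fun k => mul_pos (gbinom_pos m _ (by omega)) (gbinom_half k)
  apply Finset.sum_pos'
  · intro k _
    exact mul_nonneg (pc k).le (by positivity)
  · rcases eq_or_lt_of_le h1 with h | h
    · refine ⟨m, by simp, mul_pos (pc m) ?_⟩
      rw [← h]; norm_num
    · refine ⟨0, by simp, mul_pos (pc 0) ?_⟩
      have : 0 < 1 + x := by linarith
      simp only [pow_zero]; positivity

lemma ode (m : ℕ) (x : ℝ) :
    (1 - x ^ 2) * (derivative (derivative (Y m m))).eval x
      - (2 * (m:ℝ) + 1 + 2 * x) * (derivative (Y m m)).eval x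
      + (m:ℝ) * (m + 1) * (Y m m).eval x = 0 := by
  have := congrArg (Polynomial.eval x) (jacL_Y m)
  simpa [jacL] using this

lemma Y_ne (m : ℕ) : Y m m ≠ 0 := by
  intro h
  have := Y_pos m 0 (by norm_num) (by norm_num)
  simp [h] at this

lemma Y_natDegree (m : ℕ) : (Y m m).natDegree = m := by
  have h := congrArg (fun p => coeff p (Y m m).natDegree) (jacL_Y m)
  have hl : (Y m m).leadingCoeff ≠ 0 := leadingCoeff_ne_zero.mpr (Y_ne m)
  set p := Y m m with hp
  have hz1 : p.coeff (p.natDegree + 1) = 0 := coeff_eq_zero_of_natDegree_lt (by omega)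
  have hz2 : p.coeff (p.natDegree + 2) = 0 := coeff_eq_zero_of_natDegree_lt (by omega)
  have key : ((m:ℝ) * (m + 1) - p.natDegree * (p.natDegree + 1)) * p.leadingCoeff = 0 := by
    have e : jacL m p = derivative (derivative p) - X ^ 2 * derivative (derivative p)
       - C (2 * (m:ℝ) + 1) * derivative p - C 2 * (X * derivative p) + C ((m:ℝ) * (m + 1)) * p := by
      simp only [jacL]
      have : (C 2 : ℝ[X]) = 2 := rfl
      rw [this]; ring
    rw [e] at h
    unfold leadingCoeff
    generalize p.natDegree = d at *
    simp only [coeff_add, coeff_sub, coeff_C_mul, coeff_zero] at h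
    rcases d with _ | _ | d
    · simp [coeff_derivative, coeff_X_pow_mul', hz1, hz2] at h ⊢
      simpa [hz1, hz2] using h
    · simp [coeff_derivative, coeff_X_pow_mul', coeff_X_mul, hz1, hz2] at h ⊢
      rw [← mul_eq_zero]
      linear_combination h
    · simp [coeff_derivative, coeff_X_pow_mul', coeff_X_mul, hz1, hz2] at h ⊢
      rw [← mul_eq_zero]
      linear_combination h
  have k2 := (mul_eq_zero.mp key).resolve_right hl
  have k3 : m * (m + 1) = p.natDegree * (p.natDegree + 1) := by
    have : (m:ℝ) * (m + 1) = p.natDegree * (p.natDegree + 1) := by linarith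
    exact_mod_cast this
  nlinarith [lt_trichotomy m p.natDegree]

/-- No positive local maximum of `± Y` outside `[-1,1]`. -/
lemma no_max (m : ℕ) (hm : 0 < m) (s : ℝ) (c : ℝ) (hc : 1 < c ^ 2)
    (hpos : 0 < s * (Y m m).eval c)
    (hmax : IsLocalMax (fun x => s * (Y m m).eval x) c) : False := by
  have d1 : deriv (fun x => s * (Y m m).eval x) =
      fun x => s * (derivative (Y m m)).eval x := by
    funext x
    exact (((Y m m).hasDerivAt x).const_mul s).deriv
  have d2 : deriv (deriv (fun x => s * (Y m m).eval x)) =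
      fun x => s * (derivative (derivative (Y m m))).eval x := by
    rw [d1]
    funext x
    exact (((derivative (Y m m)).hasDerivAt x).const_mul s).deriv
  have h1 : s * (derivative (Y m m)).eval c = 0 := by
    have := hmax.deriv_eq_zero
    rwa [d1] at this
  have h2 : 0 < s * (derivative (derivative (Y m m))).eval c := by
    have o := ode m c
    have hm' : (0:ℝ) < m := by exact_mod_cast hm
    have e : (c ^ 2 - 1) * (s * (derivative (derivative (Y m m))).eval c) =
        (m:ℝ) * (m + 1) * (s * (Y m m).eval c) := by
      linear_combination (-s) * o - (2 * (m:ℝ) + 1 + 2 * c) * h1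
    have : 0 < (c ^ 2 - 1) * (s * (derivative (derivative (Y m m))).eval c) := by
      rw [e]; positivity
    exact pos_of_mul_pos_right this (by linarith)
  have hmin : IsLocalMin (fun x => s * (Y m m).eval x) c := by
    apply isLocalMin_of_deriv_deriv_pos
    · rw [d2]; exact h2
    · rw [d1]; exact h1
    · exact (((Y m m).hasDerivAt c).const_mul s).continuousAt
  have hcst : (fun x => s * (Y m m).eval x) =ᶠ[nhds c] fun _ => s * (Y m m).eval c := by
    filter_upwards [hmin, hmax] with x hx hx'
    exact le_antisymm hx' hx
  have := hcst.deriv.deriv_eq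
  rw [d2] at this
  simp at this
  rcases this with h | h <;> simp [h] at h2

lemma nonpos_between (m : ℕ) (hm : 0 < m) (a b s : ℝ) (hab : a < b) (hb : b < -1)
    (ha0 : (Y m m).eval a = 0) (hb0 : (Y m m).eval b = 0) :
    ∀ x ∈ Set.Icc a b, s * (Y m m).eval x ≤ 0 := by
  obtain ⟨c, hc, hmax⟩ := (isCompact_Icc (a := a) (b := b)).exists_isMaxOn
    (Set.nonempty_Icc.mpr hab.le)
    (f := fun x => s * (Y m m).eval x) (by fun_prop)
  intro x hx
  by_contra! h
  have hcpos : 0 < s * (Y m m).eval c := lt_of_lt_of_le h (hmax hx)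
  have hca : a ≠ c := by rintro rfl; simp [ha0] at hcpos
  have hcb : c ≠ b := by rintro rfl; simp [hb0] at hcpos
  have h1 : a < c := lt_of_le_of_ne hc.1 hca
  have h2 : c < b := lt_of_le_of_ne hc.2 hcb
  exact no_max m hm s c (by nlinarith) hcpos (hmax.isLocalMax (Icc_mem_nhds h1 h2))

lemma zero_unique (m : ℕ) (hm : 0 < m) (a b : ℝ) (hab : a < b) (hb : b < -1)
    (ha0 : (Y m m).eval a = 0) (hb0 : (Y m m).eval b = 0) : False := by
  apply Y_ne m
  apply Polynomial.eq_zero_of_infinite_isRoot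
  apply (Set.Icc_infinite hab).mono
  intro x hx
  have h1 := nonpos_between m hm a b 1 hab hb ha0 hb0 x hx
  have h2 := nonpos_between m hm a b (-1) hab hb ha0 hb0 x hx
  change (Y m m).eval x = 0
  linarith

lemma no_zero_right (m : ℕ) (hm : 0 < m) (b : ℝ) (hb : 1 < b)
    (hb0 : (Y m m).eval b = 0) : False := by
  have y1 := Y_pos m 1 (by norm_num) le_rfl
  obtain ⟨c, hc, hmax⟩ := (isCompact_Icc (a := 1) (b := b)).exists_isMaxOn
    (Set.nonempty_Icc.mpr hb.le)
    (f := fun x => 1 * (Y m m).eval x) (by fun_prop)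
  have hcpos : 0 < 1 * (Y m m).eval c :=
    lt_of_lt_of_le (by simpa using y1) (hmax (Set.left_mem_Icc.mpr hb.le))
  have hcb : c ≠ b := by rintro rfl; simp [hb0] at hcpos
  have h2 : c < b := lt_of_le_of_ne hc.2 hcb
  rcases eq_or_lt_of_le hc.1 with h | h
  · subst h
    have o := ode m 1
    have hm' : (0:ℝ) < m := by exact_mod_cast hm
    have hd : 0 < (derivative (Y m m)).eval 1 := by
      have e : (2 * (m:ℝ) + 3) * (derivative (Y m m)).eval 1 =
        (m:ℝ) * (m + 1) * (Y m m).eval 1 := by linear_combination -o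
      have : 0 < (2 * (m:ℝ) + 3) * (derivative (Y m m)).eval 1 := by rw [e]; positivity
      exact pos_of_mul_pos_right this (by positivity)
    have ht := hasDerivAt_iff_tendsto_slope.mp ((Y m m).hasDerivAt 1)
    have hev := (ht.mono_left (nhdsWithin_mono 1
      (fun x (hx : x ∈ Set.Ioi (1:ℝ)) => ne_of_gt hx))).eventually (lt_mem_nhds hd)
    obtain ⟨x, hx, hx1⟩ := (hev.and (Ioo_mem_nhdsGT hb)).exists
    have hle := hmax (Set.Ioo_subset_Icc_self hx1)
    simp only [one_mul, Set.mem_ofPred_eq] at hle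
    rw [slope_def_field] at hx
    have : 0 < x - 1 := by linarith [hx1.1]
    have := (div_pos_iff_of_pos_right this).mp hx
    linarith
  · exact no_max m hm 1 c (by nlinarith) hcpos (hmax.isLocalMax (Icc_mem_nhds h h2))

end Helpers

/-- For odd `m`, `P_m^{(m+1/2,-m-1/2)}` has exactly one real zero, and it is `< -1`. -/
theorem unique_real_zero_of_odd (m : ℕ) (hm : Odd m) :
    ∃ x : ℝ, jacobiP m ((m:ℝ) + 1/2) (-(m:ℝ) - 1/2) x = 0 ∧ x < -1 ∧
      ∀ y : ℝ, jacobiP m ((m:ℝ) + 1/2) (-(m:ℝ) - 1/2) y = 0 → y = x := by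
  have iff0 : ∀ y, jacobiP m ((m:ℝ) + 1/2) (-(m:ℝ) - 1/2) y = 0 ↔ (Y m m).eval y = 0 := by
    intro y
    rw [jacobiP_eq]
    simp
  simp only [iff0]
  have hm0 : 0 < m := hm.pos
  have left : ∀ y, (Y m m).eval y = 0 → y < -1 := by
    intro y hy
    by_contra! h
    rcases le_or_gt y 1 with h' | h'
    · exact (Y_pos m y h h').ne' hy
    · exact no_zero_right m hm0 y h' hy
  obtain ⟨x, hx⟩ : ∃ x, (Y m m).eval x = 0 := by
    by_contra! hno
    have y0 := Y_pos m 0 (by norm_num) (by norm_num)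
    rcases le_total 0 (Y m m).leadingCoeff with hl | hl
    · have := Polynomial.zero_lt_negOnePow_mul_eval_of_lt_roots_of_leadingCoeff_nonneg
        (P := Y m m) (x := 0) (fun y hy => (hno y hy).elim) hl
      rw [Y_natDegree, Int.negOnePow_odd _ (by exact_mod_cast hm)] at this
      push_cast at this
      linarith
    · have := Polynomial.eval_lt_zero_of_roots_lt_of_leadingCoeff_nonpos
        (P := Y m m) (x := 0) (fun y hy => (hno y hy).elim) hl
      linarith
  refine ⟨x, hx, left x hx, fun y hy => ?_⟩
  rcases lt_trichotomy y x with h | h | h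
  · exact (zero_unique m hm0 y x h (left x hx) hy hx).elim
  · exact h
  · exact (zero_unique m hm0 x y h (left y hy) hx hy).elim
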